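/- arXiv:1509.02898 — 2 statements merged into one kernel-verified Lean document; each statement's English description precedes it below -/
import Mathlib

section
/- Let k, m be positive integers. For every i with 1 ≤ i ≤ k, one has x_i^{m+k} = 0 in R(k,m), while x_i^{m+k−1} ≠ 0 in R(k,m). (Thus every generator x_i has height exactly m+k−1.) -/
/-!
Write `h_d(l)` for `completeHomog l d` and say that a list `l` of ring elements *vanishes above* `m`
when `h_d(l) = 0` for all `d > m`. Two consequences of the recursion
`h_{d+1}(x, l) = h_{d+1}(l) + x h_d(x, l)` and of the symmetry of `h_d` drive the proof:

* removing an element from a list that vanishes above `m` gives a list that vanishes above `m + 1`;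
* if `l` vanishes above `m + 1` and `h_{m+1}(x, l) = 0`, then `(x, l)` vanishes above `m`.

The second one shows that the defining relations of `R(k,m)` amount to saying that
`(x_1, …, x_k)` vanishes above `m`. Removing every element but `x_j`, the list `(x_j)` vanishes
above `m + k - 1`, which is `x_j ^ (m + k) = 0`.

For the nonvanishing, start with `A = 𝔽₂[t]/(t^(m+k))`, where `(t)` vanishes above `m + k - 1`.
Given a list `l` vanishing above `m + 1`, the polynomial `h_{m+1}(X, l)` is monic of degree `m + 1`
in `X`, so adjoining a root of it is an injective extension over which the list, with the root
added, vanishes above `m`. After `k - 1` steps this produces a ring `B ⊇ A` and a list of length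
`k` in `B`, containing `t`, that vanishes above `m`. By symmetry `t` can be placed at position `j`,
so there is a ring homomorphism `R(k,m) → B` sending `x_j` to `t`, and `t ^ (m + k - 1) ≠ 0`.
-/

open scoped TensorProduct

/-- Complete homogeneous symmetric polynomial of degree `d` in a list of elements
of a commutative (semi)ring: `h_d(l)`. -/
noncomputable def completeHomog {R : Type*} [CommSemiring R] : List R → ℕ → R
  | [], 0 => 1
  | [], _ + 1 => 0
  | x :: l, d => ∑ t ∈ Finset.range (d + 1), x ^ t * completeHomog l (d - t)

/-- Elementary symmetric polynomial of degree `d` in a list of elements: `e_d(l)`. -/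
noncomputable def elemSymm {R : Type*} [CommSemiring R] : List R → ℕ → R
  | _, 0 => 1
  | [], _ + 1 => 0
  | x :: l, d + 1 => elemSymm l (d + 1) + x * elemSymm l d

/-- The ideal of `(ZMod 2)[x_1, …, x_k]` generated by the complete homogeneous
symmetric polynomials `h_{m+i}(x_1, …, x_{k+1-i})` for `1 ≤ i ≤ k`. -/
noncomputable def flagIdeal (k m : ℕ) : Ideal (MvPolynomial (Fin k) (ZMod 2)) :=
  Ideal.span { p | ∃ i : ℕ, 1 ≤ i ∧ i ≤ k ∧
    p = completeHomog (((List.finRange k).take (k + 1 - i)).map MvPolynomial.X) (m + i) }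

/-- `R(k,m)`, the quotient of `(ZMod 2)[x_1, …, x_k]` by `flagIdeal k m`;
this is the mod-2 cohomology ring of the real flag manifold `F(1^k, m)`. -/
abbrev FlagRing (k m : ℕ) : Type :=
  MvPolynomial (Fin k) (ZMod 2) ⧸ flagIdeal k m

/-- The image of the variable `x_{j+1}` in `R(k,m)` (`j` is 0-indexed). -/
noncomputable def xGen (k m : ℕ) (j : Fin k) : FlagRing k m :=
  Ideal.Quotient.mk (flagIdeal k m) (MvPolynomial.X j)

/-- The zero-divisor `z_{j+1} = x_{j+1} ⊗ 1 + 1 ⊗ x_{j+1}` in `R(k,m) ⊗ R(k,m)`. -/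
noncomputable def zGen (k m : ℕ) (j : Fin k) :
    FlagRing k m ⊗[ZMod 2] FlagRing k m :=
  xGen k m j ⊗ₜ 1 + 1 ⊗ₜ xGen k m j

/-- `x_{i+1,j+1}` in the `s`-fold tensor power `R(k,m)^{⊗ s}`: the element having
`x_{j+1}` in the `(i+1)`-st tensor factor and `1` elsewhere (`i`, `j` 0-indexed). -/
noncomputable def xT (k m s : ℕ) (i : Fin s) (j : Fin k) :
    ⨂[ZMod 2] _ : Fin s, FlagRing k m :=
  PiTensorProduct.tprod (ZMod 2) (fun t => if t = i then xGen k m j else 1)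

/-- The `s`-th zero-divisor `z_{i+1,j+1} = x_{1,j+1} + x_{i+1,j+1}` in `R(k,m)^{⊗ s}`. -/
noncomputable def zT (k m s : ℕ) (hs : 0 < s) (i : Fin s) (j : Fin k) :
    ⨂[ZMod 2] _ : Fin s, FlagRing k m :=
  xT k m s ⟨0, hs⟩ j + xT k m s i j

/-! ### Complete homogeneous polynomials of lists -/

theorem completeHomog_cons {R : Type*} [CommSemiring R] (x : R) (l : List R) (d : ℕ) :
    completeHomog (x :: l) d =
      ∑ t ∈ Finset.range (d + 1), x ^ t * completeHomog l (d - t) := by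
  rw [completeHomog]

theorem completeHomog_nil_succ {R : Type*} [CommSemiring R] (d : ℕ) :
    completeHomog ([] : List R) (d + 1) = 0 := by
  rw [completeHomog]

theorem completeHomog_zero {R : Type*} [CommSemiring R] (l : List R) :
    completeHomog l 0 = 1 := by
  induction l with
  | nil => rw [completeHomog]
  | cons x l ih => simp [completeHomog_cons, ih]

theorem completeHomog_cons_succ {R : Type*} [CommSemiring R] (x : R) (l : List R) (d : ℕ) :
    completeHomog (x :: l) (d + 1) =
      completeHomog l (d + 1) + x * completeHomog (x :: l) d := by
  rw [completeHomog_cons, Finset.sum_range_succ', completeHomog_cons, Finset.mul_sum, add_comm]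
  congr 1
  · simp
  · refine Finset.sum_congr rfl fun t _ => ?_
    rw [Nat.add_sub_add_right, pow_succ']
    ring

theorem completeHomog_singleton {R : Type*} [CommSemiring R] (x : R) (d : ℕ) :
    completeHomog [x] d = x ^ d := by
  induction d with
  | zero => simp [completeHomog_zero]
  | succ d ih => rw [completeHomog_cons_succ, completeHomog_nil_succ, ih, zero_add, pow_succ']

theorem completeHomog_map {R S : Type*} [CommSemiring R] [CommSemiring S] (f : R →+* S)
    (l : List R) (d : ℕ) : completeHomog (l.map f) d = f (completeHomog l d) := by
  induction l generalizing d with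
  | nil => cases d <;> simp [completeHomog]
  | cons x l ih => simp [completeHomog_cons, ih]

theorem completeHomog_swap {R : Type*} [CommSemiring R] (x y : R) (l : List R) (d : ℕ) :
    completeHomog (x :: y :: l) d = completeHomog (y :: x :: l) d := by
  induction d using Nat.strong_induction_on with
  | _ d ih =>
    rcases d with _ | _ | d
    · simp [completeHomog_zero]
    · simp only [completeHomog_cons_succ, completeHomog_zero]
      ring
    · -- expanding twice leaves, apart from symmetric terms, `x * y * h_d(x, y, l)` on both sides
      have h1 := ih (d + 1) (by omega)
      rw [completeHomog_cons_succ x (y :: l) (d + 1), completeHomog_cons_succ y (x :: l) (d + 1),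
        completeHomog_cons_succ y l (d + 1), completeHomog_cons_succ x l (d + 1)]
      have h2 := completeHomog_cons_succ x (y :: l) d
      have h3 := completeHomog_cons_succ y (x :: l) d
      have h0 := ih d (by omega)
      rw [h3, ← h0] at h1
      calc _ = completeHomog l (d + 1 + 1) + y * completeHomog (y :: l) (d + 1)
            + x * (completeHomog (x :: l) (d + 1) + y * completeHomog (x :: y :: l) d) := by
              rw [h1]
        _ = completeHomog l (d + 1 + 1) + x * completeHomog (x :: l) (d + 1)
            + y * (completeHomog (y :: l) (d + 1) + x * completeHomog (x :: y :: l) d) := by ring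
        _ = _ := by rw [h3, ← h0, ← h1, h2]

theorem completeHomog_perm {R : Type*} [CommSemiring R] {l l' : List R} (h : l.Perm l')
    (d : ℕ) : completeHomog l d = completeHomog l' d := by
  induction h generalizing d with
  | nil => rfl
  | cons x _ ih => simp [completeHomog_cons, ih]
  | swap x y l => exact completeHomog_swap y x l d
  | trans _ _ ih1 ih2 => exact (ih1 d).trans (ih2 d)

/-! ### Lists with vanishing complete homogeneous polynomials -/

/-- All complete homogeneous polynomials of degree greater than `m` vanish on the list `l`. -/
def VanishesAbove {R : Type*} [CommRing R] (l : List R) (m : ℕ) : Prop :=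
  ∀ d, m < d → completeHomog l d = 0

theorem VanishesAbove.perm {R : Type*} [CommRing R] {l l' : List R} {m : ℕ}
    (h : VanishesAbove l m) (p : l.Perm l') : VanishesAbove l' m :=
  fun d hd => (completeHomog_perm p d).symm.trans (h d hd)

theorem VanishesAbove.of_cons {R : Type*} [CommRing R] {x : R} {l : List R} {m : ℕ}
    (h : VanishesAbove (x :: l) m) : VanishesAbove l (m + 1) := by
  rintro (_ | d) hd
  · omega
  · have := completeHomog_cons_succ x l d
    rw [h (d + 1) (by omega), h d (by omega)] at this
    simpa using this.symm

theorem VanishesAbove.of_append {R : Type*} [CommRing R] {l₁ l₂ : List R} {m : ℕ}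
    (h : VanishesAbove (l₁ ++ l₂) m) : VanishesAbove l₂ (m + l₁.length) := by
  induction l₁ generalizing m with
  | nil => exact h
  | cons x l ih =>
    have := ih (VanishesAbove.of_cons h)
    rwa [List.length_cons, add_comm l.length, ← add_assoc]

theorem VanishesAbove.cons {R : Type*} [CommRing R] {x : R} {l : List R} {m : ℕ}
    (h : VanishesAbove l (m + 1)) (hx : completeHomog (x :: l) (m + 1) = 0) :
    VanishesAbove (x :: l) m := by
  intro d hd
  induction d, hd using Nat.le_induction with
  | base => exact hx
  | succ d hd ih =>
    rw [completeHomog_cons_succ, ih, h (d + 1) (by omega)]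
    simp

/-- The relations `h_{m+i}(x_1, …, x_{k+1-i}) = 0` for `1 ≤ i ≤ k` force all `h_d(x_1, …, x_k)` with
`d > m` to vanish. -/
theorem vanishesAbove_of_relations {R : Type*} [CommRing R] (l : List R) (m : ℕ)
    (h : ∀ i, 1 ≤ i → i ≤ l.length → completeHomog (l.take (l.length + 1 - i)) (m + i) = 0) :
    VanishesAbove l m := by
  have key : ∀ j i, j + i = l.length → VanishesAbove (l.take j) (m + i) := by
    intro j
    induction j with
    | zero =>
      rintro i - (_ | d) hd
      · omega
      · simp [completeHomog_nil_succ]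
    | succ j ih =>
      intro i hi
      have hp : (l.take (j + 1)).Perm (l[j] :: l.take j) := by
        rw [List.take_succ_eq_append_getElem (by omega)]
        exact List.perm_append_comm
      refine VanishesAbove.perm (VanishesAbove.cons (ih (i + 1) (by omega)) ?_) hp.symm
      rw [← completeHomog_perm hp]
      have := h (i + 1) (by omega) (by omega)
      rwa [show l.length + 1 - (i + 1) = j + 1 by omega] at this
  simpa using key l.length 0 rfl

/-- Conversely, a list vanishing above `m` satisfies the defining relations of `R(k,m)`. -/
theorem VanishesAbove.relations {R : Type*} [CommRing R] {l : List R} {m : ℕ}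
    (h : VanishesAbove l m) (i : ℕ) (h1 : 1 ≤ i) (h2 : i ≤ l.length) :
    completeHomog (l.take (l.length + 1 - i)) (m + i) = 0 := by
  have hp : l.Perm (l.drop (l.length + 1 - i) ++ l.take (l.length + 1 - i)) := by
    conv_lhs => rw [← List.take_append_drop (l.length + 1 - i) l]
    exact List.perm_append_comm
  apply (h.perm hp).of_append
  rw [List.length_drop]
  omega

/-! ### Extending lists by adjoining roots -/

open Polynomial in
/-- The polynomial `h_d(X, l)` is monic of degree `d` in `X`. -/
theorem completeHomog_X_monic {A : Type*} [CommRing A] [Nontrivial A] (l : List A) (d : ℕ) :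
    (completeHomog ((X : A[X]) :: l.map C) d).Monic ∧
      (completeHomog ((X : A[X]) :: l.map C) d).natDegree = d := by
  induction d with
  | zero => simp [completeHomog_zero]
  | succ d ih =>
    rw [completeHomog_cons_succ, completeHomog_map]
    obtain ⟨hm, hd⟩ := ih
    have hm' := monic_X.mul hm
    have hd' : (X * completeHomog ((X : A[X]) :: l.map C) d).natDegree = d + 1 := by
      rw [monic_X.natDegree_mul hm, natDegree_X, hd, add_comm]
    have hlt : (C (completeHomog l (d + 1))).degree
        < (X * completeHomog ((X : A[X]) :: l.map C) d).degree := by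
      refine degree_C_le.trans_lt ?_
      rw [← natDegree_pos_iff_degree_pos, hd']
      omega
    refine ⟨hm'.add_of_right hlt, ?_⟩
    rw [natDegree_add_eq_right_of_degree_lt hlt, hd']

open Polynomial in
/-- The extension is `A[X]/(h_{m+1}(X, l))`, and `x` is the class of `X`. -/
theorem VanishesAbove.exists_cons {A : Type} [CommRing A] [Nontrivial A] {l : List A} {m : ℕ}
    (h : VanishesAbove l (m + 1)) :
    ∃ (B : Type) (_ : CommRing B) (f : A →+* B) (x : B), Function.Injective f ∧
      VanishesAbove (x :: l.map f) m := by
  obtain ⟨hm, hd⟩ := completeHomog_X_monic l (m + 1)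
  set p := completeHomog ((X : A[X]) :: l.map C) (m + 1) with hp
  refine ⟨AdjoinRoot p, inferInstance, AdjoinRoot.of p, AdjoinRoot.root p, ?_, ?_⟩
  · rw [injective_iff_map_eq_zero]
    intro a ha
    -- a nonzero constant is not divisible by a monic polynomial of positive degree
    rw [← AdjoinRoot.mk_C, AdjoinRoot.mk_eq_zero] at ha
    by_contra hne
    refine hm.not_dvd_of_natDegree_lt (C_ne_zero.mpr hne) ?_ ha
    rw [natDegree_C, hd]
    omega
  · apply VanishesAbove.cons
    · intro d hd
      rw [completeHomog_map, h d hd, map_zero]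
    · have : AdjoinRoot.root p :: l.map (AdjoinRoot.of p)
          = ((X : A[X]) :: l.map C).map (AdjoinRoot.mk p) := by
        simp [Function.comp_def]
      rw [this, completeHomog_map, ← hp, AdjoinRoot.mk_self]

theorem VanishesAbove.exists_append (r : ℕ) {A : Type} [CommRing A] [Nontrivial A] {l : List A}
    {m : ℕ} (h : VanishesAbove l (m + r)) :
    ∃ (B : Type) (_ : CommRing B) (f : A →+* B) (l' : List B), Function.Injective f ∧
      l'.length = r ∧ VanishesAbove (l' ++ l.map f) m := by
  induction r generalizing m with
  | zero => exact ⟨A, inferInstance, RingHom.id A, [], Function.injective_id, rfl, by simpa using h⟩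
  | succ r ih =>
    obtain ⟨B, _, f, l', hf, hl, hv⟩ := ih (m := m + 1) (by rwa [add_right_comm, add_assoc])
    have : Nontrivial B := hf.nontrivial
    obtain ⟨C, _, g, x, hg, hv'⟩ := hv.exists_cons
    exact ⟨C, inferInstance, g.comp f, x :: l'.map g, hg.comp hf, by simp [hl], by simpa using hv'⟩

/-! ### Heights of the generators -/

theorem vanishesAbove_xGen (k m : ℕ) :
    VanishesAbove ((List.finRange k).map (xGen k m)) m := by
  apply vanishesAbove_of_relations
  intro i h1 h2
  simp only [List.length_map, List.length_finRange] at h2 ⊢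
  have : xGen k m = Ideal.Quotient.mk (flagIdeal k m) ∘ MvPolynomial.X := rfl
  rw [this, ← List.map_take, ← List.map_map, completeHomog_map, Ideal.Quotient.eq_zero_iff_mem]
  exact Ideal.subset_span ⟨i, h1, h2, rfl⟩

theorem xGen_pow_eq_zero (k m : ℕ) (j : Fin k) : xGen k m j ^ (m + k) = 0 := by
  have hk := j.pos
  have hp := (List.perm_cons_erase (List.mem_finRange j)).map (xGen k m)
  have hp' := hp.trans (List.perm_append_comm (l₁ := [xGen k m j]))
  have := ((vanishesAbove_xGen k m).perm hp').of_append
  rw [← completeHomog_singleton]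
  apply this
  simp only [List.length_map, List.length_erase_of_mem (List.mem_finRange j),
    List.length_finRange]
  omega

/-- A family vanishing above `m` defines a homomorphism out of `R(k,m)`. -/
theorem exists_hom {k m : ℕ} {B : Type} [CommRing B] (φ : ZMod 2 →+* B) (y : Fin k → B)
    (h : VanishesAbove (List.ofFn y) m) :
    ∃ g : FlagRing k m →+* B, ∀ j, g (xGen k m j) = y j := by
  refine ⟨Ideal.Quotient.lift (flagIdeal k m) (MvPolynomial.eval₂Hom φ y) ?_, fun j => ?_⟩
  · intro a ha
    rw [← RingHom.mem_ker]
    refine (Ideal.span_le.mpr ?_ : flagIdeal k m ≤ _) ha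
    rintro p ⟨i, h1, h2, rfl⟩
    rw [SetLike.mem_coe, RingHom.mem_ker, ← completeHomog_map, List.map_map, List.map_take]
    have hy : (MvPolynomial.eval₂Hom φ y) ∘ MvPolynomial.X = y := by
      ext j
      simp
    have := h.relations i h1 (by simpa using h2)
    rw [hy]
    simpa [List.ofFn_eq_map] using this
  · simp [xGen]

open Polynomial in
theorem xGen_pow_ne_zero (k m : ℕ) (j : Fin k) : xGen k m j ^ (m + k - 1) ≠ 0 := by
  obtain ⟨r, rfl⟩ : ∃ r, k = r + 1 := ⟨k - 1, by have := j.pos; omega⟩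
  set p : (ZMod 2)[X] := X ^ (m + (r + 1)) with hp
  have hroot : ∀ d, AdjoinRoot.root p ^ d = 0 ↔ m + (r + 1) ≤ d := by
    intro d
    rw [← AdjoinRoot.mk_X, ← map_pow, AdjoinRoot.mk_eq_zero, hp,
      pow_dvd_pow_iff X_ne_zero not_isUnit_X]
  have : Nontrivial (AdjoinRoot p) := by
    refine AdjoinRoot.nontrivial p ?_
    rw [hp, degree_X_pow]
    exact_mod_cast Nat.succ_ne_zero (m + r)
  have hv : VanishesAbove [AdjoinRoot.root p] (m + r) := by
    intro d hd
    rw [completeHomog_singleton, hroot]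
    omega
  obtain ⟨B, _, f, l', hf, hl, hv'⟩ := hv.exists_append r
  -- the list `t, l'` as a family, in which `t` is then moved from position `0` to position `j`
  subst hl
  let y : Fin (l'.length + 1) → B := Fin.cons (f (AdjoinRoot.root p)) l'.get
  have hy : VanishesAbove (List.ofFn y) m := by
    have : List.ofFn y = [AdjoinRoot.root p].map f ++ l' := by
      simp [y]
    rw [this]
    exact hv'.perm List.perm_append_comm
  obtain ⟨g, hg⟩ := exists_hom (f.comp (AdjoinRoot.of p)) (y ∘ Equiv.swap j 0)
    (hy.perm (Equiv.Perm.ofFn_comp_perm _ y).symm)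
  have hy0 : y 0 = f (AdjoinRoot.root p) := rfl
  intro h0
  have h1 := congrArg g h0
  rw [map_pow, hg, map_zero, Function.comp_apply, Equiv.swap_apply_left, hy0, ← map_pow,
    map_eq_zero_iff f hf, hroot] at h1
  omega

/-- each generator `x_i` of `R(k,m)` satisfies `x_i^{m+k} = 0` and
`x_i^{m+k-1} ≠ 0`, i.e. has height exactly `m + k - 1`. -/
theorem statement3 (k m : ℕ) (hk : 0 < k) (hm : 0 < m) :
    ∀ j : Fin k, xGen k m j ^ (m + k) = 0 ∧ xGen k m j ^ (m + k - 1) ≠ 0 := by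
  exact fun j => ⟨xGen_pow_eq_zero k m j, xGen_pow_ne_zero k m j⟩
end

section
/- Let k, m be positive integers. (a) For each j with 1 ≤ j ≤ k, the element x_1^{m+k−1}·x_2^{m+k−2}·…·x_j^{m+k−j}·x_j vanishes in R(k,m). (b) The annihilator of the nonzero element x_1^{m+k−1}·x_2^{m+k−2}·…·x_k^m in R(k,m) is exactly the ideal generated by x_1,…,x_k (the ideal of all elements of positive degree): an element y of R(k,m) satisfies y·x_1^{m+k−1}·x_2^{m+k−2}·…·x_k^m = 0 if and only if y lies in the ideal (x_1,…,x_k). -/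
/-!
In 0-indexed variables the relations are `h_{m+k-j}(x_0, …, x_j) = 0` for `j < k`, and the `j`-th
one is monic of degree `m + k - j` in the last variable `x_j`.

The vanishing statement follows by induction on `j`: the product
`x_0^{m+k-1} ⋯ x_{j-1}^{m+k-j}` kills `x_0, …, x_{j-1}`, so after multiplication by it the relation
`h_{m+k-j}(x_0, …, x_j) = 0` reduces to `x_j^{m+k-j} = 0` (`mul_completeHomog_append`,
`prod_mul_xGen_eq_zero`).

For the top monomial to be nonzero it suffices to map the ring to one where its image is nonzero.
Such a ring is built by adjoining a root of one monic relation at a time (`exists_model`): in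
`B[X]/(f)` with `f` monic, a nonzero `C p * X ^ e` with `e < deg f` is not divisible by `f`.

Finally every element is congruent to `0` or `1` modulo `(x_0, …, x_{k-1})`. The top monomial is
killed by all variables but is nonzero, so its annihilator is exactly that ideal.
-/

open scoped TensorProduct

theorem map_completeHomog {R S : Type*} [CommSemiring R] [CommSemiring S] (φ : R →+* S)
    (l : List R) (d : ℕ) : φ (completeHomog l d) = completeHomog (l.map φ) d := by
  induction l generalizing d with
  | nil => cases d <;> simp [completeHomog]
  | cons x l ih => simp [completeHomog, map_sum, ih]

/-- After multiplication by an element `a` killing all variables but the last, `h_d` becomes the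
`d`-th power of the last variable. -/
theorem mul_completeHomog_append {R : Type*} [CommSemiring R] (a x : R) (l : List R) (d : ℕ)
    (h : ∀ y ∈ l, a * y = 0) : a * completeHomog (l ++ [x]) d = a * x ^ d := by
  induction l with
  | nil => rw [List.nil_append, completeHomog_singleton]
  | cons y l ih =>
    rw [List.cons_append, completeHomog, Finset.mul_sum, Finset.sum_eq_single 0]
    · simpa using ih fun z hz => h z (List.mem_cons_of_mem _ hz)
    · intro t _ ht
      obtain ⟨s, rfl⟩ := Nat.exists_eq_succ_of_ne_zero ht
      rw [pow_succ', ← mul_assoc, ← mul_assoc, h y List.mem_cons_self, zero_mul, zero_mul]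
    · simp

open Polynomial in
/-- `h_d` is monic of degree `d` as a polynomial in its last variable. -/
theorem completeHomog_natDegree_coeff {B : Type*} [CommRing B] (l : List B) (d : ℕ) :
    (completeHomog (l.map C ++ [Polynomial.X]) d).natDegree ≤ d ∧
      (completeHomog (l.map C ++ [Polynomial.X]) d).coeff d = 1 := by
  induction l generalizing d with
  | nil =>
    rw [List.map_nil, List.nil_append, completeHomog_singleton]
    exact ⟨natDegree_X_pow_le d, by simp⟩
  | cons y l ih =>
    rw [List.map_cons, List.cons_append, completeHomog]
    refine ⟨natDegree_sum_le_of_forall_le _ _ fun t _ => ?_, ?_⟩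
    · rw [← C_pow]
      exact (natDegree_C_mul_le _ _).trans ((ih _).1.trans (Nat.sub_le _ _))
    · rw [finsetSum_coeff, Finset.sum_eq_single 0]
      · simpa using (ih d).2
      · intro t ht ht0
        have := Finset.mem_range.1 ht
        rw [← C_pow, coeff_C_mul, coeff_eq_zero_of_natDegree_lt, mul_zero]
        have := (ih (d - t)).1
        omega
      · simp

open Polynomial in
/-- A model detecting the top monomial: adjoining a root of one monic relation at a time yields a
ring in which the first `n` relations hold while the top monomial in `n` variables survives. -/
theorem exists_model (N n : ℕ) (hn : n ≤ N) :
    ∃ (B : Type) (_ : CommRing B) (_ : Algebra (ZMod 2) B) (x : ℕ → B),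
      (∀ j < n, completeHomog ((List.range (j + 1)).map x) (N - j) = 0) ∧
      ∏ j ∈ Finset.range n, x j ^ (N - 1 - j) ≠ 0 := by
  induction n with
  | zero => exact ⟨ZMod 2, inferInstance, inferInstance, fun _ => 0, by simp, by simp⟩
  | succ n ih =>
    obtain ⟨B, _, _, x, hx, hp⟩ := ih (by omega)
    set p := ∏ j ∈ Finset.range n, x j ^ (N - 1 - j) with hpdef
    have : Nontrivial B := ⟨p, 0, hp⟩
    set f : B[X] := completeHomog (((List.range n).map x).map C ++ [Polynomial.X]) (N - n) with hf
    obtain ⟨hdeg, hcoeff⟩ := completeHomog_natDegree_coeff ((List.range n).map x) (N - n)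
    have hmonic : f.Monic := monic_of_natDegree_le_of_coeff_eq_one _ hdeg hcoeff
    have hnat : f.natDegree = N - n :=
      le_antisymm hdeg (le_natDegree_of_ne_zero (by rw [hcoeff]; exact one_ne_zero))
    set x' : ℕ → AdjoinRoot f := fun j => if j < n then AdjoinRoot.of f (x j) else AdjoinRoot.root f
      with hx'
    have hlist : ∀ j ≤ n, (List.range j).map x' = ((List.range j).map x).map (AdjoinRoot.of f) := by
      intro j hj
      rw [List.map_map]
      refine List.map_congr_left fun i hi => ?_
      have := List.mem_range.1 hi
      simp [hx', show i < n by omega]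
    refine ⟨AdjoinRoot f, inferInstance, inferInstance, x', fun j hj => ?_, ?_⟩
    · rcases Nat.lt_succ_iff_lt_or_eq.1 hj with hj | rfl
      · rw [hlist _ (by omega), ← map_completeHomog, hx j hj, map_zero]
      · have h0 : AdjoinRoot.mk f f = 0 := AdjoinRoot.mk_self
        rw [show AdjoinRoot.mk f f = _ from map_completeHomog (AdjoinRoot.mk f) _ _] at h0
        rw [List.range_succ, List.map_append, hlist _ le_rfl]
        convert h0 using 2
        simp [hx', Function.comp_def]
    · have hprod : ∏ j ∈ Finset.range (n + 1), x' j ^ (N - 1 - j)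
          = AdjoinRoot.mk f (C p * X ^ (N - 1 - n)) := by
        rw [Finset.prod_range_succ, map_mul, map_pow, AdjoinRoot.mk_X, AdjoinRoot.mk_C, hpdef,
          map_prod]
        congr 1
        · refine Finset.prod_congr rfl fun j hj => ?_
          simp [hx', Finset.mem_range.1 hj]
        · simp [hx']
      rw [hprod, Ne, AdjoinRoot.mk_eq_zero]
      refine hmonic.not_dvd_of_natDegree_lt ?_ ?_
      · rwa [Ne, C_mul_X_pow_eq_monomial, monomial_eq_zero_iff]
      · rw [hnat]
        exact (natDegree_C_mul_X_pow_le _ _).trans_lt (by omega)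

theorem completeHomog_xGen_eq_zero (k m : ℕ) (j : Fin k) :
    completeHomog (((List.finRange k).take (j + 1)).map (xGen k m)) (m + k - j) = 0 := by
  have hj := j.2
  have h : completeHomog (((List.finRange k).take (j + 1)).map MvPolynomial.X) (m + k - j) ∈
      flagIdeal k m := by
    refine Ideal.subset_span ⟨k - j, by omega, by omega, ?_⟩
    rw [show k + 1 - (k - j) = j + 1 by omega, show m + (k - j) = m + k - j by omega]
  rw [← Ideal.Quotient.eq_zero_iff_mem, map_completeHomog, List.map_map] at h
  exact h

theorem prod_mul_xGen_eq_zero (k m : ℕ) (hm : 0 < m) (j : Fin k) :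
    (∏ t : Fin k, xGen k m t ^ (if t ≤ j then m + k - 1 - t.val else 0)) * xGen k m j = 0 := by
  induction j using WellFoundedLT.induction with
  | ind j ih =>
    have hj := j.2
    set a := ∏ t : Fin k, xGen k m t ^ (if t < j then m + k - 1 - t.val else 0) with ha
    have hsplit : ∏ t : Fin k, xGen k m t ^ (if t ≤ j then m + k - 1 - t.val else 0) =
        a * xGen k m j ^ (m + k - 1 - j.val) := by
      have hone : xGen k m j ^ (m + k - 1 - j.val) =
          ∏ t : Fin k, xGen k m t ^ (if t = j then m + k - 1 - t.val else 0) := by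
        rw [Finset.prod_eq_single j] <;> simp +contextual
      rw [hone, ha, ← Finset.prod_mul_distrib]
      refine Finset.prod_congr rfl fun t _ => ?_
      rw [← pow_add]
      congr 1
      rcases lt_trichotomy t j with h | rfl | h
      · simp [h, h.le, h.ne]
      · simp
      · simp [h.not_ge, h.not_gt, h.ne']
    have hkill : ∀ i < j, a * xGen k m i = 0 := by
      intro i hi
      refine zero_dvd_iff.1 ?_
      rw [← ih i hi]
      refine mul_dvd_mul_right (Finset.prod_dvd_prod_of_dvd _ _ fun t _ => pow_dvd_pow _ ?_) _
      by_cases hti : t ≤ i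
      · simp [hti, hti.trans_lt hi]
      · simp [hti]
    have htake : (List.finRange k).take (j + 1) = (List.finRange k).take j ++ [j] := by
      rw [List.take_succ_eq_append_getElem (by simp)]
      simp
    have h := mul_completeHomog_append a (xGen k m j)
      (((List.finRange k).take j).map (xGen k m)) (m + k - j) (by
        intro y hy
        obtain ⟨i, hi, rfl⟩ := List.mem_map.1 hy
        refine hkill i ?_
        obtain ⟨n, hn, rfl⟩ := List.mem_take_iff_getElem.1 hi
        rw [Fin.lt_def]
        simp at hn ⊢
        omega)
    have h0 := completeHomog_xGen_eq_zero k m j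
    rw [htake, List.map_append, List.map_singleton] at h0
    rw [h0, mul_zero] at h
    rw [hsplit, mul_assoc, ← pow_succ, show m + k - 1 - j.val + 1 = m + k - j by omega, ← h]

theorem prod_xGen_ne_zero (k m : ℕ) :
    (∏ t : Fin k, xGen k m t ^ (m + k - 1 - t.val)) ≠ 0 := by
  obtain ⟨B, _, _, x, hx, hp⟩ := exists_model (m + k) k (by omega)
  let φ : MvPolynomial (Fin k) (ZMod 2) →ₐ[ZMod 2] B := MvPolynomial.aeval fun i => x i
  have hφ : ∀ p ∈ flagIdeal k m, φ p = 0 := by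
    intro p hp
    have hle : flagIdeal k m ≤ RingHom.ker φ := by
      refine Ideal.span_le.2 ?_
      rintro _ ⟨i, hi1, hik, rfl⟩
      have h := hx (k - i) (by omega)
      change (φ : MvPolynomial (Fin k) (ZMod 2) →+* B) _ = 0
      rw [map_completeHomog, List.map_map]
      rw [show m + k - (k - i) = m + i by omega, show k - i + 1 = k + 1 - i by omega] at h
      convert h using 2
      have : (List.range (k + 1 - i)) = ((List.finRange k).take (k + 1 - i)).map Fin.val := by
        rw [List.map_take, List.map_coe_finRange_eq_range, List.take_range]
        congr 1
        omega
      rw [this, List.map_map]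
      refine List.map_congr_left fun a _ => ?_
      simp [φ]
    exact hle hp
  intro h0
  have h1 : Ideal.Quotient.mk (flagIdeal k m)
      (∏ t : Fin k, MvPolynomial.X t ^ (m + k - 1 - t.val)) = 0 := by
    rw [map_prod]
    simpa [xGen] using h0
  have h2 := hφ _ (Ideal.Quotient.eq_zero_iff_mem.1 h1)
  apply hp
  rw [← h2, map_prod, Finset.prod_range]
  simp [φ]

/-- Since the coefficients lie in `ZMod 2`, the constant term of a representative is `0` or `1`. -/
theorem mem_or_sub_one_mem (k m : ℕ) (y : FlagRing k m) :
    y ∈ Ideal.span (Set.range (xGen k m)) ∨ y - 1 ∈ Ideal.span (Set.range (xGen k m)) := by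
  obtain ⟨p, rfl⟩ := Ideal.Quotient.mk_surjective y
  have key : ∃ c : ZMod 2, Ideal.Quotient.mk (flagIdeal k m) (p - MvPolynomial.C c) ∈
      Ideal.span (Set.range (xGen k m)) := by
    induction p using MvPolynomial.induction_on with
    | C a => exact ⟨a, by simp⟩
    | add p q hp hq =>
      obtain ⟨c, hc⟩ := hp
      obtain ⟨d, hd⟩ := hq
      refine ⟨c + d, ?_⟩
      rw [map_add, add_sub_add_comm, map_add]
      exact add_mem hc hd
    | mul_X p i _ =>
      refine ⟨0, ?_⟩
      rw [map_zero, sub_zero, map_mul]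
      exact Ideal.mul_mem_left _ _ (Ideal.subset_span ⟨i, rfl⟩)
  obtain ⟨c, hc⟩ := key
  have : c = 0 ∨ c = 1 := (by decide : ∀ c : ZMod 2, c = 0 ∨ c = 1) c
  rcases this with rfl | rfl
  · left; simpa using hc
  · right; simpa using hc

/-- (a) for each `1 ≤ j ≤ k`, `x_1^{m+k-1} x_2^{m+k-2} ⋯ x_j^{m+k-j} · x_j = 0`
in `R(k,m)`; (b) the element `x_1^{m+k-1} x_2^{m+k-2} ⋯ x_k^m` is nonzero and its
annihilator is exactly the ideal `(x_1, …, x_k)`. -/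
theorem statement4 (k m : ℕ) (hk : 0 < k) (hm : 0 < m) :
    (∀ j : Fin k,
      (∏ t : Fin k, xGen k m t ^ (if t ≤ j then m + k - 1 - t.val else 0)) * xGen k m j = 0) ∧
    (∏ t : Fin k, xGen k m t ^ (m + k - 1 - t.val)) ≠ 0 ∧
    (∀ y : FlagRing k m,
      y * (∏ t : Fin k, xGen k m t ^ (m + k - 1 - t.val)) = 0 ↔
        y ∈ Ideal.span (Set.range (xGen k m))) := by
  have hkill : ∀ y ∈ Ideal.span (Set.range (xGen k m)),
      y * (∏ t : Fin k, xGen k m t ^ (m + k - 1 - t.val)) = 0 := by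
    intro y hy
    induction hy using Submodule.span_induction with
    | mem y hy =>
      obtain ⟨j, rfl⟩ := hy
      rw [mul_comm]
      refine zero_dvd_iff.1 ?_
      rw [← prod_mul_xGen_eq_zero k m hm j]
      refine mul_dvd_mul_right (Finset.prod_dvd_prod_of_dvd _ _ fun t _ => pow_dvd_pow _ ?_) _
      split_ifs <;> omega
    | zero => exact zero_mul _
    | add y z _ _ hy hz => rw [add_mul, hy, hz, add_zero]
    | smul a y _ hy => rw [smul_eq_mul, mul_assoc, hy, mul_zero]
  refine ⟨prod_mul_xGen_eq_zero k m hm, prod_xGen_ne_zero k m, fun y => ⟨fun h => ?_, hkill y⟩⟩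
  refine (mem_or_sub_one_mem k m y).resolve_right fun h1 => prod_xGen_ne_zero k m ?_
  have h2 := hkill _ h1
  rwa [sub_mul, h, one_mul, zero_sub, neg_eq_zero] at h2
end
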